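/- For every integer q with 1 ≤ q ≤ 5, let δ(ζ) = ∑_{ℓ=1}^q (1/ℓ)(1−ζ)^ℓ be the BDF generating polynomial of order q. Then there exists η ∈ [0,1) such that for every complex number ζ with |ζ| < 1 one has Re(δ(ζ)/(1−ηζ)) > 0. (Note that 1−ηζ ≠ 0 whenever |ζ| < 1 and 0 ≤ η < 1.) -/

import Mathlib

/-!
The value `η = 9/10` works for all orders `q ≤ 5` at once. On the unit circle `ζ = x + iy`, the sign
of `Re (δ(ζ)/(1 - ηζ))` is that of `Re (δ(ζ) * conj (1 - ηζ))`, and eliminating `y² = 1 - x²` turns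
the latter into `(1 - x) * Q(x)` with a real polynomial `Q` of degree `q - 1` that is nonnegative on
`[-1, 1]` (`re_bdf_mul_conj_nonneg`). As `δ(ζ)/(1 - ηζ)` is holomorphic near the closed unit disc,
nonnegativity of its real part on the circle propagates to the disc by the maximum modulus
principle, and becomes strict because the value at `0` is the positive number `∑ 1/ℓ`
(`re_pos_of_re_nonneg_on_sphere`).
-/

/-- A minimum principle for the real part of a holomorphic function on the unit disc: the maximum
modulus principle applied to `exp (-f)`, whose modulus is `exp (-Re f)`. -/
lemma re_pos_of_re_nonneg_on_sphere {f : ℂ → ℂ}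
    (hf : DiffContOnCl ℂ f (Metric.ball 0 1))
    (hb : ∀ z : ℂ, ‖z‖ = 1 → 0 ≤ (f z).re) (h0 : 0 < (f 0).re)
    {z : ℂ} (hz : ‖z‖ < 1) : 0 < (f z).re := by
  have hg : DiffContOnCl ℂ (fun w => Complex.exp (-f w)) (Metric.ball 0 1) :=
    Complex.differentiable_exp.comp_diffContOnCl hf.neg
  have hle : ∀ w ∈ closure (Metric.ball (0 : ℂ) 1), ‖Complex.exp (-f w)‖ ≤ 1 := by
    intro w hw
    refine Complex.norm_le_of_forall_mem_frontier_norm_le Metric.isBounded_ball hg ?_ hw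
    intro u hu
    rw [frontier_ball _ one_ne_zero, mem_sphere_zero_iff_norm] at hu
    simpa [Complex.norm_exp] using hb u hu
  have hzm : z ∈ Metric.ball (0 : ℂ) 1 := by simpa using hz
  by_contra! hneg
  -- Otherwise `|exp (-f)|` attains its maximum at `z`, hence is constant, also at `0`.
  have hmax : IsMaxOn (norm ∘ fun w => Complex.exp (-f w)) (Metric.ball 0 1) z := by
    intro w hw
    refine (hle w (subset_closure hw)).trans ?_
    simpa [Complex.norm_exp] using hneg
  have heq := Complex.norm_eqOn_closure_of_isPreconnected_of_isMaxOn
    (convex_ball (0 : ℂ) 1).isPreconnected Metric.isOpen_ball hg hzm hmax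
    (subset_closure (Metric.mem_ball_self one_pos))
  simp only [Function.comp_apply, Function.const_apply, Complex.norm_exp, Complex.neg_re,
    Real.exp_eq_exp] at heq
  linarith

/-- The boundary estimate with `1 - (9/10) ζ` moved to the numerator: its real part is
`(1 - x) * Q(x)` where `x = Re ζ`. -/
lemma re_bdf_mul_conj_nonneg (q : ℕ) (hq1 : 1 ≤ q) (hq5 : q ≤ 5) (x y : ℝ)
    (h : x ^ 2 + y ^ 2 = 1) :
    0 ≤ ((∑ ℓ ∈ Finset.Icc 1 q, (1 / (ℓ : ℂ)) * (1 - (⟨x, y⟩ : ℂ)) ^ ℓ) *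
      (starRingEnd ℂ) (1 - ((9 / 10 : ℝ) : ℂ) * (⟨x, y⟩ : ℂ))).re := by
  have hx1 : 0 ≤ 1 - x := by nlinarith [sq_nonneg y]
  have hx2 : 0 ≤ 1 + x := by nlinarith [sq_nonneg y]
  -- The powers of `1 - ζ` in Cartesian form.
  have hp1 : (1 - (⟨x, y⟩ : ℂ)) = ⟨1 - x, -y⟩ := by
    apply Complex.ext <;> simp
  have hp2 : (1 - (⟨x, y⟩ : ℂ)) ^ 2 = ⟨2 * x ^ 2 - 2 * x, (2 * x - 2) * y⟩ := by
    rw [pow_succ, pow_one, hp1]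
    apply Complex.ext <;> simp <;> grind
  have hp3 : (1 - (⟨x, y⟩ : ℂ)) ^ 3 =
      ⟨(1 - x) * (2 * x ^ 2 - 2 * x) + (2 * x - 2) * (1 - x ^ 2),
        ((1 - x) * (2 * x - 2) - (2 * x ^ 2 - 2 * x)) * y⟩ := by
    rw [pow_succ, hp2, hp1]
    apply Complex.ext <;> simp <;> grind
  have hp4 : (1 - (⟨x, y⟩ : ℂ)) ^ 4 =
      ⟨(2 * x ^ 2 - 2 * x) ^ 2 - (2 * x - 2) ^ 2 * (1 - x ^ 2),
        2 * (2 * x ^ 2 - 2 * x) * (2 * x - 2) * y⟩ := by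
    rw [show 4 = 2 + 2 from rfl, pow_add, hp2]
    apply Complex.ext <;> simp <;> grind
  have hp5 : (1 - (⟨x, y⟩ : ℂ)) ^ 5 =
      ⟨(1 - x) * ((2 * x ^ 2 - 2 * x) ^ 2 - (2 * x - 2) ^ 2 * (1 - x ^ 2)) +
          2 * (2 * x ^ 2 - 2 * x) * (2 * x - 2) * (1 - x ^ 2),
        ((1 - x) * (2 * (2 * x ^ 2 - 2 * x) * (2 * x - 2)) -
          ((2 * x ^ 2 - 2 * x) ^ 2 - (2 * x - 2) ^ 2 * (1 - x ^ 2))) * y⟩ := by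
    rw [pow_succ, hp4, hp1]
    apply Complex.ext <;> simp <;> grind
  -- Dividing by `ℓ` acts coordinatewise.
  have hsc : ∀ (n : ℕ) (a b : ℝ), (1 / (n : ℂ)) * (⟨a, b⟩ : ℂ) = ⟨a / n, b / n⟩ := by
    intro n a b
    rw [one_div_mul_eq_div]
    apply Complex.ext
    · rw [Complex.div_natCast_re]
    · rw [Complex.div_natCast_im]
  have hconj : (starRingEnd ℂ) (1 - ((9 / 10 : ℝ) : ℂ) * (⟨x, y⟩ : ℂ)) =
      ⟨1 - 9 / 10 * x, 9 / 10 * y⟩ := by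
    apply Complex.ext <;> simp [-Complex.ofReal_div]
  rw [hconj]
  -- `hp1` comes last, since it would destroy the left-hand sides of the other four.
  interval_cases q <;>
    simp only [Finset.sum_Icc_succ_top, Finset.Icc_self, Finset.sum_singleton, pow_one,
      hp2, hp3, hp4, hp5, Nat.reduceAdd, Nat.reduceLeDiff] <;>
    simp only [hp1, hsc, Complex.mul_re, Complex.add_re, Complex.add_im] <;>
    simp only [Nat.cast_one, Nat.cast_ofNat] <;> clear hp1 hp2 hp3 hp4 hp5 hsc hconj
  · have hQ : 0 ≤ (1 - x) * (19 / 10) := by positivity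
    convert hQ using 1
    grind
  · have hQ : 0 ≤ (1 - x) * (14 / 5 - x) := mul_nonneg hx1 (by linarith)
    convert hQ using 1
    grind
  · have hQ : 0 ≤ (1 - x) * (41 / 15 - 34 / 15 * x + 4 / 3 * x ^ 2) :=
      mul_nonneg hx1 (by nlinarith [sq_nonneg (x - 17 / 20)])
    convert hQ using 1
    grind
  · have hQ : 0 ≤ (1 - x) * (26 / 15 - 13 / 6 * x + 127 / 30 * x ^ 2 - 2 * x ^ 3) :=
      mul_nonneg hx1 (by nlinarith [sq_nonneg (x - 1 / 3), mul_nonneg hx1 (sq_nonneg x)])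
    convert hQ using 1
    grind
  · have hQ : 0 ≤ (1 - x) *
        (16 / 75 + 31 / 30 * x + 839 / 150 * x ^ 2 - 206 / 25 * x ^ 3 + 16 / 5 * x ^ 4) :=
      mul_nonneg hx1 (by
        nlinarith [sq_nonneg (x + 1 / 10), sq_nonneg (x * (x - 5 / 4)), sq_nonneg x])
    convert hQ using 1
    grind

/-- **Nevanlinna–Odeh multiplier lemma.**
For every `1 ≤ q ≤ 5` there exists `η ∈ [0,1)` such that for all complex `ζ` with
`|ζ| < 1` one has `Re (δ(ζ)/(1 − ηζ)) > 0`, where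
`δ(ζ) = ∑_{ℓ=1}^q (1/ℓ)(1−ζ)^ℓ` is the BDF generating polynomial of order `q`. -/
theorem nevanlinna_odeh_multiplier (q : ℕ) (hq1 : 1 ≤ q) (hq5 : q ≤ 5) :
    ∃ η : ℝ, 0 ≤ η ∧ η < 1 ∧
      ∀ ζ : ℂ, ‖ζ‖ < 1 →
        0 < ((∑ ℓ ∈ Finset.Icc 1 q, (1 / (ℓ : ℂ)) * (1 - ζ) ^ ℓ) / (1 - (η : ℂ) * ζ)).re := by
  refine ⟨9 / 10, by norm_num, by norm_num, fun ζ hζ => ?_⟩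
  have hden : ∀ z : ℂ, ‖z‖ ≤ 1 → 1 - ((9 / 10 : ℝ) : ℂ) * z ≠ 0 := by
    intro z hz h
    have h1 : ‖((9 / 10 : ℝ) : ℂ) * z‖ = 1 := by rw [← sub_eq_zero.mp h, norm_one]
    rw [norm_mul, Complex.norm_real, Real.norm_of_nonneg (by norm_num)] at h1
    linarith
  refine re_pos_of_re_nonneg_on_sphere
    (f := fun ζ => (∑ ℓ ∈ Finset.Icc 1 q, (1 / (ℓ : ℂ)) * (1 - ζ) ^ ℓ) /
      (1 - ((9 / 10 : ℝ) : ℂ) * ζ)) ?_ ?_ ?_ hζ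
  · refine DifferentiableOn.diffContOnCl fun z hz => ?_
    rw [closure_ball _ one_ne_zero, mem_closedBall_zero_iff] at hz
    have hn : DifferentiableAt ℂ
        (fun w : ℂ => ∑ ℓ ∈ Finset.Icc 1 q, (1 / (ℓ : ℂ)) * (1 - w) ^ ℓ) z := by fun_prop
    have hd : DifferentiableAt ℂ (fun w : ℂ => 1 - ((9 / 10 : ℝ) : ℂ) * w) z := by fun_prop
    exact (hn.div hd (hden z hz)).differentiableWithinAt
  · intro z hz
    have hxy : z.re ^ 2 + z.im ^ 2 = 1 := by
      have := Complex.sq_norm z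
      rw [hz, Complex.normSq_apply] at this
      linarith
    have := re_bdf_mul_conj_nonneg q hq1 hq5 z.re z.im hxy
    -- `a / b = a * conj b * |b|⁻²`
    rw [div_eq_mul_inv, Complex.inv_def, ← mul_assoc, Complex.re_mul_ofReal]
    exact mul_nonneg this (inv_nonneg.mpr (Complex.normSq_nonneg _))
  · have h0 : (0 : ℝ) < ∑ ℓ ∈ Finset.Icc 1 q, 1 / (ℓ : ℝ) :=
      Finset.sum_pos (fun ℓ hℓ => by
        have : 0 < ℓ := (Finset.mem_Icc.mp hℓ).1
        positivity) ⟨1, by simpa using hq1⟩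
    have h1 : (∑ ℓ ∈ Finset.Icc 1 q, (1 / (ℓ : ℂ)) * (1 - 0) ^ ℓ) /
        (1 - ((9 / 10 : ℝ) : ℂ) * 0) = ((∑ ℓ ∈ Finset.Icc 1 q, 1 / (ℓ : ℝ) : ℝ) : ℂ) := by
      simp
    rw [h1, Complex.ofReal_re]
    exact h0
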